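/- arXiv:2406.06268 — 2 statements merged into one kernel-verified Lean document; each statement's English description precedes it below -/
import Mathlib

section
/- Let m₁, m₂ ≥ 1 be integers, q₀ ∈ [1, ∞], and 1 < p, q < ∞ with p' = p/(p−1). Let u : ℝ → [0,∞) and v : (0,∞) → (0,∞) be measurable with u^q locally integrable with respect to |c(λ)|^{−2} dλ and v^{−p'} locally integrable with respect to Δ(t) dt on [0,∞). Suppose there is a constant C > 0 such that for every measurable f : (0,∞) → [0,∞) vanishing outside a bounded set, with ∫₀^{∞} (v(t) f(t))^p Δ(t) dt < ∞ and with t ↦ f(t) Φ(iρ_{q₀}, t) Δ(t) integrable, one has ( ∫_{ℝ} u(λ)^q | ∫₀^{∞} f(t) Φ(λ + iρ_{q₀}, t) Δ(t) dt |^q |c(λ)|^{−2} dλ )^{1/q} ≤ C ( ∫₀^{∞} (v(t) f(t))^p Δ(t) dt )^{1/p}. Then for every fixed θ₀ with 0 < θ₀ < π/2, sup_{s>0} ( ∫₀^{θ₀/s} u(λ)^q |c(λ)|^{−2} dλ )^{1/q} · ( ∫₀^{s} v(t)^{−p'} Φ(iρ_{q₀}, t)^{p'} Δ(t) dt )^{1/p'}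 < ∞. -/
open Set intervalIntegral MeasureTheory ENNReal

/-- The density `Δ(t) = (2 sinh t)^{m₁+m₂} (2 cosh t)^{m₂}`. -/
noncomputable def Δ (m₁ m₂ : ℕ) (t : ℝ) : ℝ :=
  (2 * Real.sinh t) ^ (m₁ + m₂) * (2 * Real.cosh t) ^ m₂

/-- The constant `c₀ = √π 2^{m₂/2-2} Γ((n-1)/2)/Γ(n/2)`, `n = m₁+m₂+1`. -/
noncomputable def c₀ (m₁ m₂ : ℕ) : ℝ :=
  Real.sqrt Real.pi * 2 ^ ((m₂ : ℝ)/2 - 2) *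
    Real.Gamma (((m₁ : ℝ) + m₂ + 1 - 1)/2) / Real.Gamma (((m₁ : ℝ) + m₂ + 1)/2)

/-- The half-sum of positive roots `ρ = (m₁ + 2m₂)/2`. -/
noncomputable def ρ₀ (m₁ m₂ : ℕ) : ℝ := ((m₁ : ℝ) + 2 * m₂) / 2

/-- `ρ_p = (2/p - 1) ρ` for `p ∈ [1,∞]` (for `p = ∞` this is `-ρ`). -/
noncomputable def rhoP (m₁ m₂ : ℕ) (p : ENNReal) : ℝ := (2 / p.toReal - 1) * ρ₀ m₁ m₂

/-- The Koornwinder integral representation of the elementary spherical function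
`φ_z(a_t)`, `z ∈ ℂ`. -/
noncomputable def PhiC (m₁ m₂ : ℕ) (z : ℂ) (t : ℝ) : ℂ :=
  ((c₀ m₁ m₂ * Real.sinh (2*t) / Δ m₁ m₂ t : ℝ) : ℂ) *
    ∫ s in (0:ℝ)..t,
      (((Real.cosh (2*t) - Real.cosh (2*s)) ^ ((m₂ : ℝ)/2 - 1) : ℝ) : ℂ) *
      (∫ r in (0:ℝ)..s,
        (((Real.cosh s - Real.cosh r) ^ ((m₁ : ℝ)/2 - 1) : ℝ) : ℂ) * Complex.cos (z * r)) *
      ((Real.sinh s : ℝ) : ℂ)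

/-- The Harish-Chandra `c`-function. -/
noncomputable def cHC (m₁ m₂ : ℕ) (lam : ℝ) : ℂ :=
  (2 : ℂ) ^ ((ρ₀ m₁ m₂ : ℂ) - Complex.I * lam) *
      Complex.Gamma (((m₁ : ℂ) + m₂ + 1) / 2) * Complex.Gamma (Complex.I * lam) /
    (Complex.Gamma (((ρ₀ m₁ m₂ : ℂ) + Complex.I * lam) / 2) *
      Complex.Gamma (((m₁ : ℂ) + 2) / 4 + Complex.I * lam / 2))

/-- The Plancherel density `|c(λ)|⁻²`. -/
noncomputable def densHC (m₁ m₂ : ℕ) (lam : ℝ) : ℝ := ‖cHC m₁ m₂ lam‖ ^ (-2 : ℤ)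

theorem aux_core {μ : Measure ℝ} {g : ℝ → ℝ} {G : ℝ → ℂ} {κ : ℝ} (hκ : 0 < κ)
    (hg : AEStronglyMeasurable g μ) (hG : AEStronglyMeasurable G μ)
    (h1 : ∀ᵐ x ∂μ, ‖G x‖ ≤ g x) (h2 : ∀ᵐ x ∂μ, κ * g x ≤ (G x).re) :
    ‖∫ x, G x ∂μ‖ ≤ ∫ x, g x ∂μ ∧ κ * ∫ x, g x ∂μ ≤ (∫ x, G x ∂μ).re := by
  by_cases hi : Integrable g μ
  · have hGi : Integrable G μ := hi.mono' hG h1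
    refine ⟨norm_integral_le_of_norm_le hi h1, ?_⟩
    have : (∫ x, G x ∂μ).re = ∫ x, (G x).re ∂μ := (integral_re hGi).symm
    rw [this, ← MeasureTheory.integral_const_mul]
    exact integral_mono_ae (hi.const_mul κ) hGi.re h2
  · have hGi : ¬ Integrable G μ := by
      intro hGi
      apply hi
      have h3 : Integrable (fun x => κ⁻¹ * ‖G x‖) μ := hGi.norm.const_mul _
      refine h3.mono' hg ?_
      filter_upwards [h1, h2] with x hx1 hx2
      have h0 : 0 ≤ g x := (norm_nonneg _).trans hx1
      rw [Real.norm_of_nonneg h0, inv_mul_eq_div, le_div_iff₀ hκ]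
      have := (Complex.re_le_norm (G x))
      linarith
    rw [integral_undef hi, integral_undef hGi]
    simp

theorem aux_meas {E : Type*} [NormedAddCommGroup E] [NormedSpace ℝ E]
    (g : ℝ → ℝ → E) (hg : StronglyMeasurable (Function.uncurry g)) :
    StronglyMeasurable (fun t => ∫ s in (0:ℝ)..t, g t s) := by
  have key : ∀ S : Set (ℝ × ℝ), MeasurableSet S →
      StronglyMeasurable (fun t => ∫ s in {s | (t, s) ∈ S}, g t s) := by
    intro S hS
    have : (fun t => ∫ s in {s | (t, s) ∈ S}, g t s) =
        fun t => ∫ s, S.indicator (Function.uncurry g) (t, s) := by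
      funext t
      have hm : MeasurableSet {s | (t, s) ∈ S} := measurable_prodMk_left hS
      rw [← MeasureTheory.integral_indicator hm]
      rfl
    rw [this]
    exact (hg.indicator hS).integral_prod_right'
  have e : (fun t => ∫ s in (0:ℝ)..t, g t s) = fun t =>
      (∫ s in {s | (t, s) ∈ {x : ℝ × ℝ | 0 < x.2 ∧ x.2 ≤ x.1}}, g t s) -
      (∫ s in {s | (t, s) ∈ {x : ℝ × ℝ | x.1 < x.2 ∧ x.2 ≤ 0}}, g t s) := by
    funext t
    rfl
  rw [e]
  refine (key _ ?_).sub (key _ ?_)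
  · exact (measurableSet_lt measurable_const measurable_snd).inter
      (measurableSet_le measurable_snd measurable_fst)
  · exact (measurableSet_lt measurable_fst measurable_snd).inter
      (measurableSet_le measurable_snd measurable_const)

noncomputable def auxI (m₁ : ℕ) (b s : ℝ) : ℝ :=
  ∫ r in (0:ℝ)..s, (Real.cosh s - Real.cosh r) ^ ((m₁ : ℝ)/2 - 1) * Real.cosh (b * r)

noncomputable def auxPhi (m₁ m₂ : ℕ) (b t : ℝ) : ℝ :=
  (c₀ m₁ m₂ * Real.sinh (2*t) / Δ m₁ m₂ t) *
    ∫ s in (0:ℝ)..t, (Real.cosh (2*t) - Real.cosh (2*s)) ^ ((m₂ : ℝ)/2 - 1) * auxI m₁ b s *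
      Real.sinh s

theorem auxI_meas (m₁ : ℕ) (b : ℝ) : Measurable (auxI m₁ b) := by
  refine (aux_meas (fun s r => (Real.cosh s - Real.cosh r) ^ ((m₁ : ℝ)/2 - 1) *
    Real.cosh (b * r)) ?_).measurable
  apply Measurable.stronglyMeasurable
  unfold Function.uncurry
  fun_prop

theorem auxJ_meas (m₁ : ℕ) (z : ℂ) : Measurable (fun s : ℝ => ∫ r in (0:ℝ)..s,
        (((Real.cosh s - Real.cosh r) ^ ((m₁ : ℝ)/2 - 1) : ℝ) : ℂ) * Complex.cos (z * r)) := by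
  refine (aux_meas (fun s r => (((Real.cosh s - Real.cosh r) ^ ((m₁ : ℝ)/2 - 1) : ℝ) : ℂ) *
    Complex.cos (z * r)) ?_).measurable
  apply Measurable.stronglyMeasurable
  unfold Function.uncurry
  have : Continuous (fun p : ℝ × ℝ => Complex.cos (z * p.2)) := by fun_prop
  refine Measurable.mul ?_ this.measurable
  fun_prop

theorem auxDelta_meas (m₁ m₂ : ℕ) : Measurable (Δ m₁ m₂) := by
  unfold Δ
  fun_prop

theorem auxPhi_meas (m₁ m₂ : ℕ) (b : ℝ) : Measurable (auxPhi m₁ m₂ b) := by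
  unfold auxPhi
  have hD := auxDelta_meas m₁ m₂
  have hI := auxI_meas m₁ b
  refine Measurable.mul (by fun_prop) ?_
  refine (aux_meas (fun t s => (Real.cosh (2*t) - Real.cosh (2*s)) ^ ((m₂ : ℝ)/2 - 1) *
    auxI m₁ b s * Real.sinh s) ?_).measurable
  apply Measurable.stronglyMeasurable
  unfold Function.uncurry
  fun_prop

theorem PhiC_meas (m₁ m₂ : ℕ) (z : ℂ) : Measurable (PhiC m₁ m₂ z) := by
  unfold PhiC
  have hD := auxDelta_meas m₁ m₂
  have hI := auxJ_meas m₁ z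
  refine Measurable.mul (by fun_prop) ?_
  refine (aux_meas (fun t s => (((Real.cosh (2*t) - Real.cosh (2*s)) ^ ((m₂ : ℝ)/2 - 1) : ℝ) : ℂ) *
      (∫ r in (0:ℝ)..s,
        (((Real.cosh s - Real.cosh r) ^ ((m₁ : ℝ)/2 - 1) : ℝ) : ℂ) * Complex.cos (z * r)) *
      ((Real.sinh s : ℝ) : ℂ)) ?_).measurable
  apply Measurable.stronglyMeasurable
  unfold Function.uncurry
  refine Measurable.mul (Measurable.mul (by fun_prop) ?_) (by fun_prop)
  exact hI.comp measurable_snd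

theorem PhiC_eq (m₁ m₂ : ℕ) (b t : ℝ) :
    PhiC m₁ m₂ (Complex.I * (b : ℝ)) t = (auxPhi m₁ m₂ b t : ℝ) := by
  unfold PhiC auxPhi
  rw [Complex.ofReal_mul, ← intervalIntegral.integral_ofReal]
  congr 1
  apply intervalIntegral.integral_congr
  intro s _
  simp only
  rw [Complex.ofReal_mul, Complex.ofReal_mul, auxI, ← intervalIntegral.integral_ofReal]
  congr 2
  apply intervalIntegral.integral_congr
  intro r _
  simp only
  rw [Complex.ofReal_mul]
  congr 1
  rw [Complex.ofReal_cosh, ← Complex.cos_mul_I]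
  congr 1
  push_cast; ring

theorem aux_cos (l b r : ℝ) :
    (Complex.cos (((l:ℂ) + Complex.I * (b:ℝ)) * r)).re = Real.cos (l * r) * Real.cosh (b * r) ∧
    ‖Complex.cos (((l:ℂ) + Complex.I * (b:ℝ)) * r)‖ ≤ Real.cosh (b * r) := by
  have e : ((l:ℂ) + Complex.I * (b:ℝ)) * r = ((l * r : ℝ) : ℂ) + ((b * r : ℝ) : ℂ) * Complex.I := by
    push_cast; ring
  rw [e, Complex.cos_add_mul_I]
  have e2 : Complex.cos ((l * r : ℝ) : ℂ) * Complex.cosh ((b * r : ℝ) : ℂ) -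
      Complex.sin ((l * r : ℝ) : ℂ) * Complex.sinh ((b * r : ℝ) : ℂ) * Complex.I =
      ⟨Real.cos (l * r) * Real.cosh (b * r), - (Real.sin (l * r) * Real.sinh (b * r))⟩ := by
    rw [← Complex.ofReal_cos, ← Complex.ofReal_sin, ← Complex.ofReal_cosh, ← Complex.ofReal_sinh,
      ← Complex.ofReal_mul, ← Complex.ofReal_mul]
    apply Complex.ext <;> simp [-Complex.ofReal_mul, -Complex.ofReal_cos, -Complex.ofReal_sin,
      -Complex.ofReal_cosh, -Complex.ofReal_sinh]
  rw [e2]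
  refine ⟨rfl, ?_⟩
  apply le_of_sq_le_sq _ (Real.cosh_pos _).le
  rw [Complex.sq_norm, Complex.normSq_apply]
  simp only
  have h1 := Real.sin_sq_add_cos_sq (l * r)
  have h2 := Real.cosh_sq (b * r)
  nlinarith [sq_nonneg (Real.sin (l * r)), sq_nonneg (Real.sinh (b*r))]

theorem PhiC_bound (m₁ m₂ : ℕ) (hm₁ : 1 ≤ m₁) (l b t θ : ℝ) (ht : 0 < t) (hl : 0 ≤ l)
    (hlt : l * t ≤ θ) (hθ : 0 < θ) (hθ2 : θ < Real.pi / 2) :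
    ‖PhiC m₁ m₂ ((l:ℂ) + Complex.I * (b:ℝ)) t‖ ≤ auxPhi m₁ m₂ b t ∧
    Real.cos θ * auxPhi m₁ m₂ b t ≤ (PhiC m₁ m₂ ((l:ℂ) + Complex.I * (b:ℝ)) t).re := by
  have hκ : 0 < Real.cos θ := Real.cos_pos_of_mem_Ioo ⟨by linarith, hθ2⟩
  have hc : 0 ≤ c₀ m₁ m₂ * Real.sinh (2*t) / Δ m₁ m₂ t := by
    have h1 : (1:ℝ) ≤ m₁ := by exact_mod_cast hm₁
    have h2 : (0:ℝ) ≤ m₂ := by positivity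
    have hs : 0 < Real.sinh (2*t) := Real.sinh_pos_iff.2 (by linarith)
    have hs' : 0 < Real.sinh t := Real.sinh_pos_iff.2 (by linarith)
    have g1 : 0 < Real.Gamma (((m₁ : ℝ) + m₂ + 1 - 1)/2) := Real.Gamma_pos_of_pos (by linarith)
    have g2 : 0 < Real.Gamma (((m₁ : ℝ) + m₂ + 1)/2) := Real.Gamma_pos_of_pos (by linarith)
    have hD : 0 < Δ m₁ m₂ t := by unfold Δ; positivity
    have hc0 : 0 ≤ c₀ m₁ m₂ := by unfold c₀; positivity
    positivity
  -- inner
  have inner : ∀ s, 0 < s → s ≤ t → ‖∫ r in (0:ℝ)..s,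
        (((Real.cosh s - Real.cosh r) ^ ((m₁ : ℝ)/2 - 1) : ℝ) : ℂ) *
          Complex.cos (((l:ℂ) + Complex.I * (b:ℝ)) * r)‖ ≤ auxI m₁ b s ∧
      Real.cos θ * auxI m₁ b s ≤ (∫ r in (0:ℝ)..s,
        (((Real.cosh s - Real.cosh r) ^ ((m₁ : ℝ)/2 - 1) : ℝ) : ℂ) *
          Complex.cos (((l:ℂ) + Complex.I * (b:ℝ)) * r)).re := by
    intro s hs hst
    unfold auxI
    rw [intervalIntegral.integral_of_le hs.le, intervalIntegral.integral_of_le hs.le]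
    have hK : ∀ r ∈ Ioc 0 s, 0 ≤ (Real.cosh s - Real.cosh r) ^ ((m₁ : ℝ)/2 - 1) := by
      intro r hr
      apply Real.rpow_nonneg
      have := Real.cosh_le_cosh.2 (show |r| ≤ |s| by
        rw [abs_of_pos hr.1, abs_of_pos hs]; exact hr.2)
      linarith
    have hcm : Continuous (fun r : ℝ => Complex.cos (((l:ℂ) + Complex.I * (b:ℝ)) * r)) := by
      fun_prop
    refine aux_core hκ (Measurable.aestronglyMeasurable (by fun_prop))
      (Measurable.aestronglyMeasurable (Measurable.mul (by fun_prop) hcm.measurable)) ?_ ?_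
    · filter_upwards [ae_restrict_mem measurableSet_Ioc] with r hr
      rw [norm_mul, Complex.norm_real, Real.norm_of_nonneg (hK r hr)]
      exact mul_le_mul_of_nonneg_left (aux_cos l b r).2 (hK r hr)
    · filter_upwards [ae_restrict_mem measurableSet_Ioc] with r hr
      rw [Complex.re_ofReal_mul, (aux_cos l b r).1]
      have hcos : Real.cos θ ≤ Real.cos (l * r) := by
        apply Real.cos_le_cos_of_nonneg_of_le_pi (mul_nonneg hl hr.1.le) (by linarith)
        exact (mul_le_mul_of_nonneg_left (hr.2.trans hst) hl).trans hlt
      have := mul_le_mul_of_nonneg_right hcos (mul_nonneg (hK r hr) (Real.cosh_pos (b * r)).le)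
      linarith
  have outer : ‖∫ s in (0:ℝ)..t,
      (((Real.cosh (2*t) - Real.cosh (2*s)) ^ ((m₂ : ℝ)/2 - 1) : ℝ) : ℂ) *
      (∫ r in (0:ℝ)..s,
        (((Real.cosh s - Real.cosh r) ^ ((m₁ : ℝ)/2 - 1) : ℝ) : ℂ) *
          Complex.cos (((l:ℂ) + Complex.I * (b:ℝ)) * r)) *
      ((Real.sinh s : ℝ) : ℂ)‖ ≤ (∫ s in (0:ℝ)..t,
        (Real.cosh (2*t) - Real.cosh (2*s)) ^ ((m₂ : ℝ)/2 - 1) * auxI m₁ b s * Real.sinh s) ∧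
      Real.cos θ * (∫ s in (0:ℝ)..t,
        (Real.cosh (2*t) - Real.cosh (2*s)) ^ ((m₂ : ℝ)/2 - 1) * auxI m₁ b s * Real.sinh s) ≤
      (∫ s in (0:ℝ)..t,
      (((Real.cosh (2*t) - Real.cosh (2*s)) ^ ((m₂ : ℝ)/2 - 1) : ℝ) : ℂ) *
      (∫ r in (0:ℝ)..s,
        (((Real.cosh s - Real.cosh r) ^ ((m₁ : ℝ)/2 - 1) : ℝ) : ℂ) *
          Complex.cos (((l:ℂ) + Complex.I * (b:ℝ)) * r)) *
      ((Real.sinh s : ℝ) : ℂ)).re := by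
    have hI := auxI_meas m₁ b
    have hJ := auxJ_meas m₁ ((l:ℂ) + Complex.I * (b:ℝ))
    rw [intervalIntegral.integral_of_le ht.le, intervalIntegral.integral_of_le ht.le]
    have hK : ∀ s ∈ Ioc 0 t, 0 ≤ (Real.cosh (2*t) - Real.cosh (2*s)) ^ ((m₂ : ℝ)/2 - 1) := by
      intro r hr
      apply Real.rpow_nonneg
      have := Real.cosh_le_cosh.2 (show |2*r| ≤ |2*t| by
        rw [abs_of_pos (by linarith [hr.1]), abs_of_pos (by linarith)]; linarith [hr.2])
      linarith
    refine aux_core hκ (Measurable.aestronglyMeasurable (by fun_prop))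
      (Measurable.aestronglyMeasurable
        (Measurable.mul (Measurable.mul (by fun_prop) hJ) (by fun_prop))) ?_ ?_
    · filter_upwards [ae_restrict_mem measurableSet_Ioc] with s hs
      have hsh : 0 ≤ Real.sinh s := Real.sinh_nonneg_iff.2 hs.1.le
      rw [norm_mul, norm_mul, Complex.norm_real, Complex.norm_real, Real.norm_of_nonneg (hK s hs),
        Real.norm_of_nonneg hsh]
      exact mul_le_mul_of_nonneg_right
        (mul_le_mul_of_nonneg_left (inner s hs.1 hs.2).1 (hK s hs)) hsh
    · filter_upwards [ae_restrict_mem measurableSet_Ioc] with s hs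
      have hsh : 0 ≤ Real.sinh s := Real.sinh_nonneg_iff.2 hs.1.le
      rw [Complex.re_mul_ofReal, Complex.re_ofReal_mul]
      have := mul_le_mul_of_nonneg_right
        (mul_le_mul_of_nonneg_left (inner s hs.1 hs.2).2 (hK s hs)) hsh
      linarith
  unfold PhiC auxPhi
  rw [norm_mul, Complex.norm_real, Real.norm_of_nonneg hc, Complex.re_ofReal_mul]
  refine ⟨mul_le_mul_of_nonneg_left outer.1 hc, ?_⟩
  have := mul_le_mul_of_nonneg_left outer.2 hc
  linarith

/-- necessary condition for Pitt's inequality, radial form. -/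
theorem stmt9 (m₁ m₂ : ℕ) (hm₁ : 1 ≤ m₁) (hm₂ : 1 ≤ m₂)
    (q₀ : ENNReal) (hq₀ : 1 ≤ q₀)
    (p q p' : ℝ) (hp : 1 < p) (hq : 1 < q) (hp'def : p' = p / (p - 1))
    (u : ℝ → ℝ) (v : ℝ → ℝ) (hu : Measurable u) (hv : Measurable v)
    (hu0 : ∀ lam, 0 ≤ u lam) (hv0 : ∀ t ∈ Ioi (0:ℝ), 0 < v t)
    (huloc : ∀ R : ℝ, 0 < R →
      (∫⁻ lam in Icc (-R) R,
        ENNReal.ofReal (u lam) ^ q * ENNReal.ofReal (densHC m₁ m₂ lam)) < ⊤)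
    (hvloc : ∀ R : ℝ, 0 < R →
      (∫⁻ t in Ioc (0:ℝ) R,
        ENNReal.ofReal (v t) ^ (-p') * ENNReal.ofReal (Δ m₁ m₂ t)) < ⊤)
    (C : ℝ) (hC : 0 < C)
    (hPitt : ∀ f : ℝ → ℝ, Measurable f → (∀ t, 0 ≤ f t) →
      (∃ R : ℝ, ∀ t, R ≤ t → f t = 0) →
      (∫⁻ t in Ioi (0:ℝ),
          ENNReal.ofReal (v t * f t) ^ p * ENNReal.ofReal (Δ m₁ m₂ t)) < ⊤ →
      Integrable
        (fun t => f t * (PhiC m₁ m₂ (Complex.I * (rhoP m₁ m₂ q₀ : ℝ)) t).re * Δ m₁ m₂ t)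
        (volume.restrict (Ioi 0)) →
      (∫⁻ lam : ℝ,
          ENNReal.ofReal (u lam) ^ q *
            (‖∫ t in Ioi (0:ℝ),
                (f t : ℂ) * PhiC m₁ m₂ ((lam : ℂ) + Complex.I * (rhoP m₁ m₂ q₀ : ℝ)) t *
                  (Δ m₁ m₂ t : ℝ)‖₊ : ℝ≥0∞) ^ q *
            ENNReal.ofReal (densHC m₁ m₂ lam)) ^ (1/q)
        ≤ ENNReal.ofReal C *
          (∫⁻ t in Ioi (0:ℝ),
            ENNReal.ofReal (v t * f t) ^ p * ENNReal.ofReal (Δ m₁ m₂ t)) ^ (1/p)) :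
    ∀ θ₀ : ℝ, 0 < θ₀ → θ₀ < Real.pi / 2 →
      ∃ M : ℝ, ∀ s : ℝ, 0 < s →
        (∫⁻ lam in Ioo (0:ℝ) (θ₀/s),
            ENNReal.ofReal (u lam) ^ q * ENNReal.ofReal (densHC m₁ m₂ lam)) ^ (1/q) *
        (∫⁻ t in Ioo (0:ℝ) s,
            ENNReal.ofReal (v t) ^ (-p') *
              ENNReal.ofReal ((PhiC m₁ m₂ (Complex.I * (rhoP m₁ m₂ q₀ : ℝ)) t).re) ^ p' *
              ENNReal.ofReal (Δ m₁ m₂ t)) ^ (1/p')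
          ≤ ENNReal.ofReal M := by
  intro θ₀ hθ hθ2
  have hκ : 0 < Real.cos θ₀ := Real.cos_pos_of_mem_Ioo ⟨by linarith, hθ2⟩
  refine ⟨C / Real.cos θ₀, fun s hs => ?_⟩
  simp only [PhiC_eq, Complex.ofReal_re] at hPitt ⊢
  generalize hb : rhoP m₁ m₂ q₀ = b at hPitt ⊢
  set Φ : ℝ → ℝ := auxPhi m₁ m₂ b with hΦdef
  have hΦm : Measurable Φ := auxPhi_meas m₁ m₂ b
  have hΔm : Measurable (Δ m₁ m₂) := auxDelta_meas m₁ m₂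
  have hΦ0 : ∀ t, 0 < t → 0 ≤ Φ t := fun t ht =>
    (norm_nonneg _).trans (PhiC_bound m₁ m₂ hm₁ 0 b t θ₀ ht le_rfl (by linarith) hθ hθ2).1
  have hΔ0 : ∀ t, 0 < t → 0 ≤ Δ m₁ m₂ t := by
    intro t ht
    have hs' : 0 < Real.sinh t := Real.sinh_pos_iff.2 ht
    unfold Δ; positivity
  have hp1 : 0 < p - 1 := by linarith
  have hp'0 : 0 < p' := by rw [hp'def]; positivity
  have hp'1 : 0 < p' - 1 := by
    have : p' - 1 = 1 / (p - 1) := by rw [hp'def]; field_simp; ring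
    rw [this]; positivity
  have hpp : p * (p' - 1) = p' := by rw [hp'def]; field_simp; ring
  have hinv : 1 / p + 1 / p' = 1 := by rw [hp'def]; field_simp; ring
  set w : ℝ → ℝ := fun t => v t ^ (-p') * Φ t ^ p' * Δ m₁ m₂ t with hwdef
  have hwm : Measurable w := by fun_prop
  have hw0 : ∀ t, 0 < t → 0 ≤ w t := fun t ht =>
    mul_nonneg (mul_nonneg (Real.rpow_nonneg (hv0 t ht).le _) (Real.rpow_nonneg (hΦ0 t ht) _))
      (hΔ0 t ht)
  have hw : ∀ t, 0 < t → ENNReal.ofReal (v t) ^ (-p') * ENNReal.ofReal (Φ t) ^ p' *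
      ENNReal.ofReal (Δ m₁ m₂ t) = ENNReal.ofReal (w t) := by
    intro t ht
    rw [ENNReal.ofReal_rpow_of_pos (hv0 t ht), ENNReal.ofReal_rpow_of_nonneg (hΦ0 t ht) hp'0.le,
      ← ENNReal.ofReal_mul (Real.rpow_nonneg (hv0 t ht).le _),
      ← ENNReal.ofReal_mul (mul_nonneg (Real.rpow_nonneg (hv0 t ht).le _)
        (Real.rpow_nonneg (hΦ0 t ht) _))]
  rw [setLIntegral_congr_fun (g := fun t => ENNReal.ofReal (w t)) measurableSet_Ioo
    (fun t ht => hw t ht.1)]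
  set U := ∫⁻ lam in Ioo (0:ℝ) (θ₀/s),
            ENNReal.ofReal (u lam) ^ q * ENNReal.ofReal (densHC m₁ m₂ lam) with hU
  have hUtop : U ≠ ⊤ := by
    refine ne_top_of_le_ne_top (huloc (θ₀/s) (by positivity)).ne ?_
    exact lintegral_mono_set (fun x hx => ⟨by linarith [hx.1, hx.2], hx.2.le⟩)
  have hq0 : 0 < q := by linarith
  let A : ℕ → Set ℝ := fun N => Ioo 0 s ∩ {t | Φ t ≤ N}
  have hAm : ∀ N, MeasurableSet (A N) := fun N =>
    measurableSet_Ioo.inter (measurableSet_le hΦm measurable_const)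
  -- the main estimate
  have claim : ∀ N : ℕ, U ^ (1/q) * (∫⁻ t in A N, ENNReal.ofReal (w t)) ^ (1/p') ≤
      ENNReal.ofReal (C / Real.cos θ₀) := by
    intro N
    set J := ∫⁻ t in A N, ENNReal.ofReal (w t) with hJ
    have hJtop : J ≠ ⊤ := by
      have h1 : J ≤ ∫⁻ t in A N, ENNReal.ofReal ((N:ℝ) ^ p') *
          (ENNReal.ofReal (v t) ^ (-p') * ENNReal.ofReal (Δ m₁ m₂ t)) := by
        refine setLIntegral_mono' (hAm N) (fun t ht => ?_)
        have ht0 : 0 < t := ht.1.1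
        rw [← hw t ht0, ENNReal.ofReal_rpow_of_nonneg (hΦ0 t ht0) hp'0.le]
        have : ENNReal.ofReal (Φ t ^ p') ≤ ENNReal.ofReal ((N:ℝ) ^ p') :=
          ENNReal.ofReal_le_ofReal (Real.rpow_le_rpow (hΦ0 t ht0) ht.2 hp'0.le)
        calc _ = ENNReal.ofReal (Φ t ^ p') *
          (ENNReal.ofReal (v t) ^ (-p') * ENNReal.ofReal (Δ m₁ m₂ t)) := by ring
          _ ≤ _ := by gcongr
      refine ne_top_of_le_ne_top ?_ h1
      rw [lintegral_const_mul _ (by fun_prop)]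
      refine ENNReal.mul_ne_top ENNReal.ofReal_ne_top ?_
      refine ne_top_of_le_ne_top (hvloc s hs).ne ?_
      exact lintegral_mono_set (fun x hx => ⟨hx.1.1, hx.1.2.le⟩)
    let f : ℝ → ℝ := (A N).indicator (fun t => v t ^ (-p') * Φ t ^ (p' - 1))
    have hfm : Measurable f := Measurable.indicator (by fun_prop) (hAm N)
    have hf0 : ∀ t, 0 ≤ f t := fun t => Set.indicator_nonneg (fun t ht =>
      mul_nonneg (Real.rpow_nonneg (hv0 t ht.1.1).le _)
        (Real.rpow_nonneg (hΦ0 t ht.1.1) _)) t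
    have hfoff : ∀ t, t ∉ A N → f t = 0 := fun t ht => Set.indicator_of_notMem ht _
    have hfon : ∀ t, t ∈ A N → f t = v t ^ (-p') * Φ t ^ (p' - 1) :=
      fun t ht => Set.indicator_of_mem ht _
    have hfw : ∀ t, f t * Φ t * Δ m₁ m₂ t = (A N).indicator w t := by
      intro t
      by_cases ht : t ∈ A N
      · rw [hfon t ht, Set.indicator_of_mem ht, hwdef]
        simp only
        have : Φ t ^ p' = Φ t ^ (p' - 1) * Φ t := by
          conv_lhs => rw [show p' = (p' - 1) + 1 by ring]
          rw [Real.rpow_add_of_nonneg (hΦ0 t ht.1.1) hp'1.le zero_le_one, Real.rpow_one]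
        rw [this]; ring
      · rw [hfoff t ht, Set.indicator_of_notMem ht]; simp
    have hAI : A N ⊆ Ioi 0 := fun t ht => ht.1.1
    have hnorm : (∫⁻ t in Ioi (0:ℝ),
          ENNReal.ofReal (v t * f t) ^ p * ENNReal.ofReal (Δ m₁ m₂ t)) = J := by
      have : (∫⁻ t in Ioi (0:ℝ),
          ENNReal.ofReal (v t * f t) ^ p * ENNReal.ofReal (Δ m₁ m₂ t)) =
          ∫⁻ t in Ioi (0:ℝ), (A N).indicator (fun t => ENNReal.ofReal (w t)) t := by
        refine setLIntegral_congr_fun measurableSet_Ioi (fun t ht => ?_)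
        by_cases hA : t ∈ A N
        · have hvt := hv0 t ht
          have hvf : 0 ≤ v t * f t := mul_nonneg hvt.le (hf0 t)
          rw [Set.indicator_of_mem hA, ENNReal.ofReal_rpow_of_nonneg hvf (by linarith),
            ← ENNReal.ofReal_mul (Real.rpow_nonneg hvf _), hfon t hA]
          congr 1
          rw [hwdef]
          simp only
          congr 1
          have e : v t * (v t ^ (-p') * Φ t ^ (p' - 1)) = v t ^ (1 - p') * Φ t ^ (p' - 1) := by
            rw [← mul_assoc, sub_eq_add_neg 1 p', Real.rpow_add hvt, Real.rpow_one]
          rw [e, Real.mul_rpow (Real.rpow_nonneg hvt.le _) (Real.rpow_nonneg (hΦ0 t ht) _),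
            ← Real.rpow_mul hvt.le, ← Real.rpow_mul (hΦ0 t ht)]
          congr 2 <;> linarith
        · rw [Set.indicator_of_notMem hA, hfoff t hA]
          simp [ENNReal.zero_rpow_of_pos (show 0 < p by linarith)]
      rw [this, lintegral_indicator (hAm N), Measure.restrict_restrict (hAm N),
        Set.inter_eq_left.2 hAI]
    have hwi : Integrable ((A N).indicator w) (volume.restrict (Ioi 0)) := by
      rw [integrable_indicator_iff (hAm N)]
      unfold IntegrableOn
      rw [Measure.restrict_restrict (hAm N), Set.inter_eq_left.2 hAI]
      refine ⟨hwm.aestronglyMeasurable, ?_⟩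
      rw [hasFiniteIntegral_iff_ofReal]
      · exact lt_top_iff_ne_top.2 hJtop
      · filter_upwards [ae_restrict_mem (hAm N)] with t ht using hw0 t ht.1.1
    have hwint : ∫ t in Ioi (0:ℝ), (A N).indicator w t = J.toReal := by
      rw [MeasureTheory.integral_indicator (hAm N), Measure.restrict_restrict (hAm N),
        Set.inter_eq_left.2 hAI, integral_eq_lintegral_of_nonneg_ae _ hwm.aestronglyMeasurable]
      filter_upwards [ae_restrict_mem (hAm N)] with t ht using hw0 t ht.1.1
    have hP := hPitt f hfm hf0 ⟨s, fun t ht => hfoff t (fun h => absurd h.1.2 (not_lt.2 ht))⟩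
      (by rw [hnorm]; exact lt_top_iff_ne_top.2 hJtop)
      (by simp only [hfw]; exact hwi)
    rw [hnorm] at hP
    have hlow : ∀ lam ∈ Ioo (0:ℝ) (θ₀/s), ENNReal.ofReal (Real.cos θ₀) * J ≤
        (‖∫ t in Ioi (0:ℝ),
                (f t : ℂ) * PhiC m₁ m₂ ((lam : ℂ) + Complex.I * (b : ℝ)) t *
                  (Δ m₁ m₂ t : ℝ)‖₊ : ℝ≥0∞) := by
      intro lam hlam
      have hbd : ∀ t ∈ A N, _ := fun t ht => PhiC_bound m₁ m₂ hm₁ lam b t θ₀ ht.1.1 hlam.1.le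
        (((mul_le_mul_of_nonneg_left ht.1.2.le hlam.1.le)).trans
          ((le_div_iff₀ hs).1 hlam.2.le)) hθ hθ2
      have hPm := PhiC_meas m₁ m₂ ((lam : ℂ) + Complex.I * (b : ℝ))
      have := (aux_core (μ := volume.restrict (Ioi (0:ℝ))) (g := (A N).indicator w)
        (G := fun t => (f t : ℂ) * PhiC m₁ m₂ ((lam : ℂ) + Complex.I * (b : ℝ)) t *
                  (Δ m₁ m₂ t : ℝ)) hκ hwi.1 (Measurable.aestronglyMeasurable (by fun_prop)) ?_ ?_).2
      · rw [hwint] at this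
        have h2 := this.trans (Complex.re_le_norm _)
        rw [← ENNReal.ofReal_toReal hJtop, ← ENNReal.ofReal_mul hκ.le, ← enorm_eq_nnnorm,
          ← ofReal_norm]
        exact ENNReal.ofReal_le_ofReal h2
      · filter_upwards [ae_restrict_mem measurableSet_Ioi] with t ht
        rw [← hfw t, norm_mul, norm_mul, Complex.norm_real, Complex.norm_real,
          Real.norm_of_nonneg (hf0 t), Real.norm_of_nonneg (hΔ0 t ht)]
        by_cases hA : t ∈ A N
        · exact mul_le_mul_of_nonneg_right (mul_le_mul_of_nonneg_left (hbd t hA).1 (hf0 t))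
            (hΔ0 t ht)
        · simp [hfoff t hA]
      · filter_upwards [ae_restrict_mem measurableSet_Ioi] with t ht
        rw [← hfw t, Complex.re_mul_ofReal, Complex.re_ofReal_mul]
        by_cases hA : t ∈ A N
        · have := mul_le_mul_of_nonneg_right (mul_le_mul_of_nonneg_left (hbd t hA).2 (hf0 t))
            (hΔ0 t ht)
          linarith
        · simp [hfoff t hA]
    set κ := ENNReal.ofReal (Real.cos θ₀) with hκdef
    have hκ0 : κ ≠ 0 := by simpa [hκdef] using hκ
    have hκt : κ ≠ ⊤ := ENNReal.ofReal_ne_top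
    have hmain : U ^ (1/q) * (κ * J) ≤ ENNReal.ofReal C * J ^ (1/p) := by
      refine le_trans ?_ hP
      have e : U ^ (1/q) * (κ * J) = (U * (κ * J) ^ q) ^ (1/q) := by
        rw [ENNReal.mul_rpow_of_nonneg _ _ (by positivity), ← ENNReal.rpow_mul,
          mul_one_div_cancel hq0.ne', ENNReal.rpow_one]
      rw [e]
      refine ENNReal.rpow_le_rpow ?_ (by positivity)
      rw [hU, ← lintegral_mul_const' _ _
        (ENNReal.rpow_ne_top_of_nonneg hq0.le (ENNReal.mul_ne_top hκt hJtop))]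
      refine le_trans ?_ (setLIntegral_le_lintegral (Ioo (0:ℝ) (θ₀/s)) _)
      refine setLIntegral_mono' measurableSet_Ioo (fun lam hlam => ?_)
      rw [mul_right_comm]
      gcongr
      exact hlow lam hlam
    by_cases hJ0 : J = 0
    · rw [hJ0, ENNReal.zero_rpow_of_pos (by positivity)]; simp
    rw [ENNReal.ofReal_div_of_pos hκ, ENNReal.le_div_iff_mul_le (Or.inl hκ0) (Or.inl hκt)]
    have hJp0 : J ^ (1/p) ≠ 0 := by
      simp [ENNReal.rpow_eq_zero_iff, hJ0, hJtop]
    have hJpt : J ^ (1/p) ≠ ⊤ := ENNReal.rpow_ne_top_of_nonneg (by positivity) hJtop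
    have hsplit : J = J ^ (1/p) * J ^ (1/p') := by
      rw [← ENNReal.rpow_add _ _ hJ0 hJtop, hinv, ENNReal.rpow_one]
    rw [← ENNReal.mul_le_mul_iff_left hJp0 hJpt]
    refine le_trans (le_of_eq ?_) hmain
    conv_rhs => rw [hsplit]
    ring
  -- pass to the limit
  have hlim : Filter.Tendsto (fun N : ℕ => ∫⁻ t in A N, ENNReal.ofReal (w t)) Filter.atTop
      (nhds (∫⁻ t in Ioo (0:ℝ) s, ENNReal.ofReal (w t))) := by
    have hmono : Monotone A := fun i j hij t ht =>
      ⟨ht.1, le_trans (show Φ t ≤ i from ht.2) (by exact_mod_cast hij)⟩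
    have hun : ⋃ N, A N = Ioo 0 s := by
      ext t
      simp only [A, Set.mem_iUnion, Set.mem_inter_iff, Set.mem_ofPred_eq]
      constructor
      · rintro ⟨N, h, _⟩; exact h
      · intro h
        obtain ⟨N, hN⟩ := exists_nat_ge (Φ t)
        exact ⟨N, h, hN⟩
    rw [← hun, setLIntegral_iUnion_of_directed _ hmono.directed_le]
    exact tendsto_atTop_iSup (fun i j hij => lintegral_mono_set (hmono hij))
  refine le_of_tendsto' (ENNReal.Tendsto.const_mul
    ((ENNReal.continuous_rpow_const (y := 1/p')).continuousAt.tendsto.comp hlim)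
    (Or.inr (ENNReal.rpow_ne_top_of_nonneg (by positivity) hUtop))) claim
end

section
/- Let m₁ ≥ 1 and m₂ ≥ 0 be integers, n = m₁ + m₂ + 1, ρ = (m₁ + 2m₂)/2, and let μ_Δ be the measure Δ(t) dt on (0,∞), where Δ(t) = (2 sinh t)^{m₁+m₂} (2 cosh t)^{m₂}. Let δ > 0 and let h(t) = e^{−2ρδ t} on (0,∞). Then there exist constants C₁, C₂ > 0 (depending on m₁, m₂, δ) such that the non-increasing rearrangement h* of h with respect to μ_Δ satisfies C₁ ≤ h*(t) ≤ 1 for 0 < t ≤ e^{2ρ}, and C₁ t^{−δ} ≤ h*(t) ≤ C₂ t^{−δ} for t > e^{2ρ}. -/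
open MeasureTheory Set ENNReal

/-- The measure `Δ(t) dt` on `(0,∞)`, the radial part of the Haar measure. -/
noncomputable def μΔ (m₁ m₂ : ℕ) : Measure ℝ :=
  (volume.restrict (Ioi (0:ℝ))).withDensity (fun t => ENNReal.ofReal (Δ m₁ m₂ t))

/-- The non-increasing rearrangement of `f` with respect to `μ`:
`f*(t) = inf {α : μ({x : |f x| > α}) ≤ t}`. -/
noncomputable def rearr {X : Type*} [MeasurableSpace X] (μ : Measure X)
    (f : X → ℝ) (t : ℝ) : ℝ≥0∞ :=
  sInf {α : ℝ≥0∞ | μ {x | α < ENNReal.ofReal |f x|} ≤ ENNReal.ofReal t}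


lemma two_rho (m₁ m₂ : ℕ) : 2 * ρ₀ m₁ m₂ = (m₁ : ℝ) + 2 * m₂ := by
  unfold ρ₀; ring

lemma exp_split (m₁ m₂ : ℕ) (x : ℝ) :
    Real.exp ((2 * ρ₀ m₁ m₂) * x) = Real.exp x ^ (m₁ + m₂) * Real.exp x ^ m₂ := by
  rw [two_rho, ← pow_add, ← Real.exp_nat_mul]
  congr 1
  push_cast
  ring

lemma Δ_le (m₁ m₂ : ℕ) (x : ℝ) (hx : 0 ≤ x) :
    Δ m₁ m₂ x ≤ 2 ^ m₂ * Real.exp ((2 * ρ₀ m₁ m₂) * x) := by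
  rw [exp_split]
  have h0 : 0 ≤ Real.sinh x := Real.sinh_nonneg_iff.2 hx
  have h1 : 2 * Real.sinh x ≤ Real.exp x := by
    rw [Real.sinh_eq]; linarith [Real.exp_pos (-x)]
  have h2 : 2 * Real.cosh x ≤ 2 * Real.exp x := by
    have : Real.exp (-x) ≤ Real.exp x := Real.exp_le_exp.2 (by linarith)
    rw [Real.cosh_eq]; linarith
  have h3 := Real.cosh_pos x
  calc Δ m₁ m₂ x ≤ Real.exp x ^ (m₁ + m₂) * (2 * Real.exp x) ^ m₂ := by
        unfold Δ; gcongr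
    _ = _ := by rw [mul_pow]; ring

lemma le_Δ (m₁ m₂ : ℕ) (x : ℝ) (hx : 1 ≤ x) :
    (1 / 2) ^ (m₁ + m₂) * Real.exp ((2 * ρ₀ m₁ m₂) * x) ≤ Δ m₁ m₂ x := by
  rw [exp_split]
  have he := Real.add_one_le_exp x
  have hp := Real.exp_pos x
  have hm : Real.exp (-x) ≤ 1 := Real.exp_le_one_iff.2 (by linarith)
  have h1 : 1 / 2 * Real.exp x ≤ 2 * Real.sinh x := by
    rw [Real.sinh_eq]; linarith
  have h2 : Real.exp x ≤ 2 * Real.cosh x := by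
    rw [Real.cosh_eq]; linarith [Real.exp_pos (-x)]
  calc _ = (1 / 2 * Real.exp x) ^ (m₁ + m₂) * Real.exp x ^ m₂ := by rw [mul_pow]; ring
    _ ≤ _ := by unfold Δ; gcongr

lemma μΔ_Iio_le (m₁ m₂ : ℕ) (hm₁ : 1 ≤ m₁) (s : ℝ) :
    μΔ m₁ m₂ (Iio s) ≤ ENNReal.ofReal (2 ^ m₂ * Real.exp ((2 * ρ₀ m₁ m₂) * s)) := by
  have ha : 1 ≤ 2 * ρ₀ m₁ m₂ := by
    rw [two_rho]
    have : (1 : ℝ) ≤ m₁ := by exact_mod_cast hm₁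
    have : (0 : ℝ) ≤ m₂ := by positivity
    linarith
  set a := 2 * ρ₀ m₁ m₂ with hadef
  have ha0 : 0 < a := by linarith
  unfold μΔ
  rw [withDensity_apply _ measurableSet_Iio, Measure.restrict_restrict measurableSet_Iio]
  have hint : IntegrableOn (fun x => 2 ^ m₂ * Real.exp (a * x)) (Iic s) :=
    (integrableOn_exp_mul_Iic ha0 s).const_mul _
  calc ∫⁻ x in Iio s ∩ Ioi 0, ENNReal.ofReal (Δ m₁ m₂ x)
      ≤ ∫⁻ x in Iio s ∩ Ioi 0, ENNReal.ofReal (2 ^ m₂ * Real.exp (a * x)) := by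
        apply setLIntegral_mono' (measurableSet_Iio.inter measurableSet_Ioi)
        intro x hx
        exact ENNReal.ofReal_le_ofReal (Δ_le m₁ m₂ x (le_of_lt hx.2))
    _ ≤ ∫⁻ x in Iic s, ENNReal.ofReal (2 ^ m₂ * Real.exp (a * x)) :=
        lintegral_mono_set (fun x hx => mem_Iic.2 (le_of_lt (mem_Iio.1 hx.1)))
    _ = ENNReal.ofReal (∫ x in Iic s, 2 ^ m₂ * Real.exp (a * x)) := by
        rw [ofReal_integral_eq_lintegral_ofReal hint]
        exact Filter.Eventually.of_forall (fun x => by positivity)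
    _ ≤ _ := by
        apply ENNReal.ofReal_le_ofReal
        rw [integral_const_mul, integral_exp_mul_Iic ha0]
        gcongr
        exact div_le_self (Real.exp_pos _).le ha

lemma le_μΔ_Iic (m₁ m₂ : ℕ) (hm₁ : 1 ≤ m₁) (s : ℝ) (hs : 2 ≤ s) :
    ENNReal.ofReal ((1 / 2) ^ (m₁ + m₂) * Real.exp ((2 * ρ₀ m₁ m₂) * (s - 1)))
      ≤ μΔ m₁ m₂ (Iic s) := by
  have ha : 0 ≤ 2 * ρ₀ m₁ m₂ := by
    rw [two_rho]; positivity
  unfold μΔ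
  rw [withDensity_apply _ measurableSet_Iic, Measure.restrict_restrict measurableSet_Iic]
  calc _ = ∫⁻ x in Ioc (s - 1) s,
        ENNReal.ofReal ((1 / 2) ^ (m₁ + m₂) * Real.exp ((2 * ρ₀ m₁ m₂) * (s - 1))) := by
        rw [setLIntegral_const, Real.volume_Ioc]; simp
    _ ≤ ∫⁻ x in Ioc (s - 1) s, ENNReal.ofReal (Δ m₁ m₂ x) := by
        apply setLIntegral_mono' measurableSet_Ioc
        intro x hx
        apply ENNReal.ofReal_le_ofReal
        refine le_trans ?_ (le_Δ m₁ m₂ x (by linarith [hx.1]))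
        have := hx.1.le
        gcongr
    _ ≤ _ := by
        have hsub : Ioc (s - 1) s ⊆ Iic s ∩ Ioi 0 := fun x hx => mem_inter (mem_Iic.2 hx.2)
          (mem_Ioi.2 (by linarith [hx.1]))
        exact lintegral_mono_set hsub

lemma rearr_le (m₁ m₂ : ℕ) (hm₁ : 1 ≤ m₁) (δ : ℝ) (hδ : 0 < δ) (s t : ℝ)
    (h : μΔ m₁ m₂ (Iio s) ≤ ENNReal.ofReal t) :
    rearr (μΔ m₁ m₂) (fun s => Real.exp (-(2 * ρ₀ m₁ m₂ * δ * s))) t ≤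
      ENNReal.ofReal (Real.exp (-(2 * ρ₀ m₁ m₂ * δ * s))) := by
  have ha : 0 < 2 * ρ₀ m₁ m₂ := by
    rw [two_rho]; positivity
  apply sInf_le
  refine le_trans (measure_mono ?_) h
  intro x hx
  simp only [mem_ofPred_eq, abs_of_pos (Real.exp_pos _)] at hx
  rw [ENNReal.ofReal_lt_ofReal_iff (Real.exp_pos _), Real.exp_lt_exp] at hx
  have : (2 * ρ₀ m₁ m₂ * δ) * x < (2 * ρ₀ m₁ m₂ * δ) * s := by linarith
  exact lt_of_mul_lt_mul_left this (by positivity)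

lemma le_rearr (m₁ m₂ : ℕ) (hm₁ : 1 ≤ m₁) (δ : ℝ) (hδ : 0 < δ) (s t : ℝ)
    (h : ENNReal.ofReal t < μΔ m₁ m₂ (Iic s)) :
    ENNReal.ofReal (Real.exp (-(2 * ρ₀ m₁ m₂ * δ * s))) ≤
    rearr (μΔ m₁ m₂) (fun s => Real.exp (-(2 * ρ₀ m₁ m₂ * δ * s))) t := by
  have ha : 0 < 2 * ρ₀ m₁ m₂ := by
    rw [two_rho]; positivity
  apply le_sInf
  intro α hα
  by_contra hlt
  push Not at hlt
  refine absurd (lt_of_lt_of_le h (le_trans (measure_mono ?_) hα)) (lt_irrefl _)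
  intro x hx
  simp only [mem_ofPred_eq, abs_of_pos (Real.exp_pos _)]
  refine lt_of_lt_of_le hlt (ENNReal.ofReal_le_ofReal (Real.exp_le_exp.2 ?_))
  have : x ≤ s := hx
  have : (2 * ρ₀ m₁ m₂ * δ) * x ≤ (2 * ρ₀ m₁ m₂ * δ) * s := by gcongr
  linarith

/-- rearrangement of the exponential weight `1/ω_δ = e^{-2ρδt}` with
respect to `Δ(t) dt`: it is `≍ 1` for `t ≤ e^{2ρ}` and `≍ t^{-δ}` for `t > e^{2ρ}`. -/
theorem stmt12 (m₁ m₂ : ℕ) (hm₁ : 1 ≤ m₁) (n : ℕ) (hn : n = m₁ + m₂ + 1)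
    (δ : ℝ) (hδ : 0 < δ) :
    ∃ C₁ C₂ : ℝ, 0 < C₁ ∧ 0 < C₂ ∧
      (∀ t : ℝ, 0 < t → t ≤ Real.exp (2 * ρ₀ m₁ m₂) →
        ENNReal.ofReal C₁ ≤ rearr (μΔ m₁ m₂) (fun s => Real.exp (-(2 * ρ₀ m₁ m₂ * δ * s))) t ∧
        rearr (μΔ m₁ m₂) (fun s => Real.exp (-(2 * ρ₀ m₁ m₂ * δ * s))) t ≤ 1) ∧
      (∀ t : ℝ, Real.exp (2 * ρ₀ m₁ m₂) < t →
        ENNReal.ofReal (C₁ * t ^ (-δ)) ≤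
          rearr (μΔ m₁ m₂) (fun s => Real.exp (-(2 * ρ₀ m₁ m₂ * δ * s))) t ∧
        rearr (μΔ m₁ m₂) (fun s => Real.exp (-(2 * ρ₀ m₁ m₂ * δ * s))) t ≤
          ENNReal.ofReal (C₂ * t ^ (-δ))) := by
  have ha : 0 < 2 * ρ₀ m₁ m₂ := by
    rw [two_rho]; positivity
  have key : ∀ y : ℝ, 0 < y →
      Real.exp (-(2 * ρ₀ m₁ m₂ * δ * (Real.log y / (2 * ρ₀ m₁ m₂)))) = y ^ (-δ) := by
    intro y hy
    rw [Real.rpow_def_of_pos hy]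
    have hr : ρ₀ m₁ m₂ ≠ 0 := fun h => by simp [h] at ha
    congr 1
    field_simp
  have key2 : ∀ y : ℝ, 0 < y →
      Real.exp ((2 * ρ₀ m₁ m₂) * (Real.log y / (2 * ρ₀ m₁ m₂))) = y := by
    intro y hy
    rw [mul_div_cancel₀ _ ha.ne', Real.exp_log hy]
  set E := Real.exp (2 * ρ₀ m₁ m₂) with hE
  have hE1 : 1 < E := Real.one_lt_exp_iff.2 ha
  set M : ℝ := 2 * E * 2 ^ (m₁ + m₂) with hM
  have hME : E ≤ M := by
    have : (1 : ℝ) ≤ 2 ^ (m₁ + m₂) := one_le_pow₀ (by norm_num)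
    nlinarith
  have hM0 : 0 < M := by linarith
  -- the lower bound
  have low : ∀ T t : ℝ, E ≤ T → t ≤ T → ENNReal.ofReal ((M * T) ^ (-δ)) ≤
      rearr (μΔ m₁ m₂) (fun s => Real.exp (-(2 * ρ₀ m₁ m₂ * δ * s))) t := by
    intro T t hT htT
    have hT0 : 0 < T := by linarith
    have hMT : 0 < M * T := by positivity
    rw [← key _ hMT]
    apply le_rearr m₁ m₂ hm₁ δ hδ
    refine lt_of_lt_of_le ?_ (le_μΔ_Iic m₁ m₂ hm₁ _ ?_)
    · rw [mul_sub, Real.exp_sub, key2 _ hMT, mul_one, ← hE]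
      have : (1 / 2 : ℝ) ^ (m₁ + m₂) * (M * T / E) = 2 * T := by
        rw [hM, one_div, inv_pow]
        field_simp
      rw [this, ENNReal.ofReal_lt_ofReal_iff (by positivity)]
      linarith
    · rw [le_div_iff₀ ha, Real.le_log_iff_exp_le hMT]
      have : Real.exp (2 * (2 * ρ₀ m₁ m₂)) = E * E := by
        rw [hE, ← Real.exp_add]; congr 1; ring
      rw [this]
      gcongr
  refine ⟨(M * E) ^ (-δ), (2 ^ m₂ : ℝ) ^ δ, by positivity, by positivity, ?_, ?_⟩
  · intro t ht htE
    refine ⟨low E t le_rfl htE, ?_⟩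
    have h := rearr_le m₁ m₂ hm₁ δ hδ 0 t (by
      have : μΔ m₁ m₂ (Iio 0) = 0 := by
        unfold μΔ
        rw [withDensity_apply _ measurableSet_Iio, Measure.restrict_restrict measurableSet_Iio]
        have : Iio (0 : ℝ) ∩ Ioi 0 = ∅ := by
          ext x
          simp only [mem_inter_iff, mem_Iio, mem_Ioi, mem_empty_iff_false, iff_false, not_and]
          intro h1 h2
          linarith
        rw [this]; simp
      rw [this]; exact zero_le)
    simpa using h
  · intro t htE
    have ht : 0 < t := by linarith
    constructor
    · refine le_trans (ENNReal.ofReal_le_ofReal ?_) (low t t htE.le le_rfl)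
      rw [Real.mul_rpow hM0.le ht.le]
      refine mul_le_mul_of_nonneg_right ?_ (by positivity)
      exact Real.rpow_le_rpow_of_nonpos hM0 (by nlinarith) (by linarith)
    · have hy : 0 < t / 2 ^ m₂ := by positivity
      have h := rearr_le m₁ m₂ hm₁ δ hδ (Real.log (t / 2 ^ m₂) / (2 * ρ₀ m₁ m₂)) t (by
        refine le_trans (μΔ_Iio_le m₁ m₂ hm₁ _) (ENNReal.ofReal_le_ofReal ?_)
        rw [key2 _ hy]
        apply le_of_eq
        field_simp)
      rw [key _ hy] at h
      refine le_trans h (le_of_eq ?_)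
      congr 1
      rw [Real.div_rpow ht.le (by positivity), Real.rpow_neg (by positivity : (0:ℝ) ≤ 2 ^ m₂), div_inv_eq_mul, mul_comm]
end
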